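/- Let T = [[X, Y], [0, Z]] be an n×n complex block upper triangular matrix with X of size r×r and Z of size (n−r)×(n−r). Then det(I_n + T*T) ≥ det(I_r + conj(X)·X) · det(I_{n−r} + conj(Z)·Z), where both factors on the right are real. -/

import Mathlib

open Matrix

/-!
The key inequality is a Cauchy–Schwarz inequality for determinants,
`|det (1 + Aᴴ B)|² ≤ det (1 + Aᴴ A) * det (1 + Bᴴ B)`. It holds because the Gram matrix of the block
columns `(1, A)` and `(1, B)` is positive semidefinite, so its Schur complement is too, and because
the determinant is monotone on positive semidefinite matrices.

Write `N A = det (1 + Aᴴ A)`. Applying the inequality to `T` and the block diagonal matrix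
`diag (X, Z)` gives `(N X * N Z)² ≤ (N X * N Z) * N T`, that is `N X * N Z ≤ N T`. Applying it to
`A = Xᵀ`, `B = X` gives `|det (1 + conj X * X)| ≤ N X`, because `N Xᵀ = N X`; similarly for `Z`.
The determinants `det (1 + conj X * X)` are real because conjugation turns them into
`det (1 + X * conj X)`, which has the same value.
-/

section

open scoped ComplexOrder

theorem one_le_det_one_add {n : Type*} [Fintype n] [DecidableEq n] {P : Matrix n n ℂ}
    (hP : P.PosSemidef) : 1 ≤ (1 + P).det := by
  have hdet : (1 + P).det = ∏ i, (1 + (hP.1.eigenvalues i : ℂ)) := by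
    have h := hP.1.spectral_theorem
    rw [Unitary.conjStarAlgAut_apply] at h
    set U : Matrix n n ℂ := (hP.1.eigenvectorUnitary).1
    set D : Matrix n n ℂ := diagonal (RCLike.ofReal ∘ hP.1.eigenvalues) with hD
    have hU : U * star U = 1 := Unitary.coe_mul_star_self _
    have hU' : star U * U = 1 := Unitary.coe_star_mul_self _
    have h2 : 1 + P = U * (1 + D) * star U := by
      rw [mul_add, add_mul, mul_one, hU, ← h]
    rw [h2, det_mul_comm, ← mul_assoc, hU', one_mul, hD, ← diagonal_one, diagonal_add, det_diagonal]
    simp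
  have hreal : (1 : ℝ) ≤ ∏ i, (1 + hP.1.eigenvalues i) :=
    Finset.prod_induction _ (1 ≤ ·) (fun _ _ => one_le_mul_of_one_le_of_one_le) le_rfl
      fun i _ => le_add_of_nonneg_right (hP.eigenvalues_nonneg i)
  rw [hdet]
  exact_mod_cast hreal

/-- The determinant is monotone on positive semidefinite matrices: if `A` is invertible and
`P = Qᴴ Q`, then
`det (A + P) = det A * det (1 + Q A⁻¹ Qᴴ)`; if `A` is singular, the left side vanishes. -/
theorem det_le_det_add {n : Type*} [Fintype n] [DecidableEq n] {A P : Matrix n n ℂ}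
    (hA : A.PosSemidef) (hP : P.PosSemidef) : A.det ≤ (A + P).det := by
  by_cases h0 : A.det = 0
  · rw [h0]; exact (hA.add hP).det_nonneg
  have hu : IsUnit A.det := isUnit_iff_ne_zero.mpr h0
  obtain ⟨Q, rfl⟩ : ∃ Q : Matrix n n ℂ, P = Qᴴ * Q := by
    open scoped MatrixOrder Matrix.Norms.L2Operator in
    exact CStarAlgebra.nonneg_iff_eq_star_mul_self.mp hP.nonneg
  have h1 : A + Qᴴ * Q = A * (1 + A⁻¹ * Qᴴ * Q) := by
    rw [mul_add, mul_one, mul_assoc A⁻¹, mul_nonsing_inv_cancel_left _ _ hu]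
  rw [h1, det_mul, det_one_add_mul_comm, ← mul_assoc]
  exact le_mul_of_one_le_right hA.det_nonneg
    (one_le_det_one_add (hA.inv.mul_mul_conjTranspose_same Q))

theorem posDef_one_add {m n : Type*} [Fintype m] [Fintype n] [DecidableEq n] (A : Matrix m n ℂ) :
    (1 + Aᴴ * A).PosDef :=
  PosDef.one.add_posSemidef (posSemidef_conjTranspose_mul_self A)

/-- Cauchy–Schwarz inequality for determinants. With `M`, `K`, `N` the blocks of the Gram matrix, the
Schur complement gives `Kᴴ M⁻¹ K ≤ N`; take determinants and multiply by `det M`. -/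
theorem normSq_det_le {n : Type*} [Fintype n] [DecidableEq n] (A B : Matrix n n ℂ) :
    ‖(1 + Aᴴ * B).det‖ ^ 2 ≤ (1 + Aᴴ * A).det.re * (1 + Bᴴ * B).det.re := by
  have hM := posDef_one_add A
  have hN := posDef_one_add B
  set M := 1 + Aᴴ * A with hMdef
  set K := 1 + Aᴴ * B with hKdef
  set N := 1 + Bᴴ * B with hNdef
  have hgram : (fromBlocks M K Kᴴ N).PosSemidef := by
    convert! posSemidef_conjTranspose_mul_self (fromBlocks (1 : Matrix n n ℂ) 1 A B) using 1
    rw [fromBlocks_conjTranspose, fromBlocks_multiply]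
    simp [hMdef, hKdef, hNdef]
  have hu : IsUnit M.det := (isUnit_iff_isUnit_det _).mp hM.isUnit
  have : Invertible M := hM.isUnit.invertible
  have hS := (PosDef.fromBlocks₁₁ K N hM).mp hgram
  have hle := det_le_det_add (hM.inv.posSemidef.conjTranspose_mul_mul_same K) hS
  rw [add_sub_cancel, det_mul, det_mul, det_conjTranspose] at hle
  have hmul := mul_le_mul_of_nonneg_left hle hM.posSemidef.det_nonneg
  have hinv : M.det * M⁻¹.det = 1 := by
    rw [← det_mul, mul_nonsing_inv _ hu, det_one]
  have heq : M.det * (star K.det * M⁻¹.det * K.det) = ((‖K.det‖ ^ 2 : ℝ) : ℂ) := by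
    have : star K.det * K.det = ((‖K.det‖ ^ 2 : ℝ) : ℂ) := by
      push_cast
      exact Complex.conj_mul' _
    rw [← this]
    linear_combination (star K.det * K.det) * hinv
  rw [heq] at hmul
  have him : M.det.im = 0 := (Complex.le_def.mp hM.det_pos.le).2.symm
  have := (Complex.le_def.mp hmul).1
  rwa [Complex.ofReal_re, Complex.mul_re, him, zero_mul, sub_zero] at this

theorem det_re_pos {n : Type*} [Fintype n] [DecidableEq n] (A : Matrix n n ℂ) :
    0 < (1 + Aᴴ * A).det.re :=
  (Complex.lt_def.mp (posDef_one_add A).det_pos).1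

theorem det_im_zero {n : Type*} [Fintype n] [DecidableEq n] (A : Matrix n n ℂ) :
    (1 + Aᴴ * A).det.im = 0 :=
  (Complex.lt_def.mp (posDef_one_add A).det_pos).2.symm

end

theorem im_det_conj_mul_self {n : Type*} [Fintype n] [DecidableEq n] (X : Matrix n n ℂ) :
    (1 + X.map (starRingEnd ℂ) * X).det.im = 0 := by
  rw [← Complex.conj_eq_iff_im, RingHom.map_det, map_add, map_one, map_mul]
  have h : (starRingEnd ℂ).mapMatrix (X.map (starRingEnd ℂ)) = X := by
    ext i j; simp
  rw [h, RingHom.mapMatrix_apply, det_one_add_mul_comm]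

theorem abs_det_conj_mul_self_le {n : Type*} [Fintype n] [DecidableEq n] (X : Matrix n n ℂ) :
    |(1 + X.map (starRingEnd ℂ) * X).det.re| ≤ (1 + Xᴴ * X).det.re := by
  have hconj : X.map (starRingEnd ℂ) = Xᵀᴴ := by
    ext i j; simp
  have htr : (1 + Xᵀᴴ * Xᵀ).det = (1 + Xᴴ * X).det := by
    rw [det_one_add_mul_comm Xᴴ X, ← det_transpose]
    congr 1
    rw [transpose_add, transpose_mul, transpose_one, transpose_transpose]
    rfl
  have h := normSq_det_le Xᵀ X
  rw [htr, ← hconj] at h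
  exact (Complex.abs_re_le_norm _).trans
    ((sq_le_sq₀ (norm_nonneg _) (det_re_pos X).le).mp (h.trans_eq (sq _).symm))

theorem stmt_8 (r s : ℕ) (X : Matrix (Fin r) (Fin r) ℂ) (Y : Matrix (Fin r) (Fin s) ℂ)
    (Z : Matrix (Fin s) (Fin s) ℂ) (T : Matrix (Fin r ⊕ Fin s) (Fin r ⊕ Fin s) ℂ)
    (hT : T = Matrix.fromBlocks X Y 0 Z) :
    ((1 + X.map (starRingEnd ℂ) * X).det).im = 0 ∧
      ((1 + Z.map (starRingEnd ℂ) * Z).det).im = 0 ∧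
      ((1 + Tᴴ * T).det).re ≥
        ((1 + X.map (starRingEnd ℂ) * X).det).re *
          ((1 + Z.map (starRingEnd ℂ) * Z).det).re := by
  refine ⟨im_det_conj_mul_self X, im_det_conj_mul_self Z, ?_⟩
  set S : Matrix (Fin r ⊕ Fin s) (Fin r ⊕ Fin s) ℂ := fromBlocks X 0 0 Z with hS
  have hST : (1 + Sᴴ * T).det = (1 + Xᴴ * X).det * (1 + Zᴴ * Z).det := by
    rw [hS, hT, fromBlocks_conjTranspose, fromBlocks_multiply, ← fromBlocks_one, fromBlocks_add]
    simp
  have hSS : (1 + Sᴴ * S).det = (1 + Xᴴ * X).det * (1 + Zᴴ * Z).det := by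
    rw [hS, fromBlocks_conjTranspose, fromBlocks_multiply, ← fromBlocks_one, fromBlocks_add]
    simp
  have hre : (1 + Sᴴ * S).det.re = (1 + Xᴴ * X).det.re * (1 + Zᴴ * Z).det.re := by
    rw [hSS, Complex.mul_re, det_im_zero, zero_mul, sub_zero]
  have hle : (1 + Sᴴ * S).det.re ≤ (1 + Tᴴ * T).det.re := by
    have h := normSq_det_le S T
    rw [hST, ← hSS] at h
    have h2 := pow_le_pow_left₀ (det_re_pos S).le (Complex.re_le_norm (1 + Sᴴ * S).det) 2
    rw [sq] at h2
    exact le_of_mul_le_mul_left (h2.trans h) (det_re_pos S)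
  calc _ ≤ |(1 + X.map (starRingEnd ℂ) * X).det.re| * |(1 + Z.map (starRingEnd ℂ) * Z).det.re| := by
        rw [← abs_mul]; exact le_abs_self _
    _ ≤ (1 + Xᴴ * X).det.re * (1 + Zᴴ * Z).det.re :=
        mul_le_mul (abs_det_conj_mul_self_le X) (abs_det_conj_mul_self_le Z) (abs_nonneg _)
          (det_re_pos X).le
    _ ≤ _ := hre ▸ hle
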